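/- For every integer k ≥ 1 and every real number x with x² ≠ 1: Σ_{i=1}^{k} U_{i-1}(x)·U_{i+1}(x) = (U_2(x)·U_{2k}(x) - 2x·U_{2k-1}(x) - 2(k+1)·T_2(x) - 1)/(4(x² - 1)). -/

import Mathlib

/-- Evaluation of the Chebyshev polynomial of the first kind `T_n` at a real `x`
(indices extended to all integers via the Chebyshev recurrence). -/
noncomputable def chebT (n : ℤ) (x : ℝ) : ℝ := (Polynomial.Chebyshev.T ℝ n).eval x

/-- Evaluation of the Chebyshev polynomial of the second kind `U_n` at a real `x`
(indices extended to all integers via the Chebyshev recurrence). -/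
noncomputable def chebU (n : ℤ) (x : ℝ) : ℝ := (Polynomial.Chebyshev.U ℝ n).eval x

/-- `Z_n(x) = (U_n(x) - U_{n-1}(x) - 1)/(2(x - 1))`. -/
noncomputable def Zc (n : ℤ) (x : ℝ) : ℝ := (chebU n x - chebU (n - 1) x - 1) / (2 * (x - 1))

/-!
The product formula `2 (x² - 1) U_m U_n = T_{m+n+2} - T_{m-n}` (over `ℝ`, with `x = cos θ`, this is
`-2 sin ((m+1)θ) sin ((n+1)θ) = cos ((m+n+2)θ) - cos ((m-n)θ)`) gives
`4 (x² - 1) U_{i-1} U_{i+1} = 2 T_{2i+2} - 2 T_2`. As `2 T_{2i+2} = U_{2i+2} - U_{2i}`, the sum over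
`i` telescopes to `U_{2k+2} - U_2 - 2k T_2 = U_{2k+2} - 2(k+1) T_2 - 1`, and
`U_{2k+2} = U_2 U_{2k} - U_1 U_{2k-1}` by the addition formula.
-/

section Telescoping

open Finset

theorem sum_Ioc_int_sub_pred {A : Type*} [AddCommGroup A] (f : ℤ → A) {m n : ℤ} (hmn : m ≤ n) :
    ∑ i ∈ Ioc m n, (f i - f (i - 1)) = f n - f m := by
  induction n, hmn using Int.leInduction with
  | base => simp
  | succ n hmn ih =>
    rw [← insert_Ioc_right_eq_Ioc_add_one hmn, sum_insert (by simp), ih, add_sub_cancel_right,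
      sub_add_sub_cancel]

end Telescoping

section Chebyshev

open Polynomial Polynomial.Chebyshev Finset

variable (R : Type*) [CommRing R]

theorem chebyshev_U_add (m n : ℤ) :
    U R (m + n) = U R m * U R n - U R (m - 1) * U R (n - 1) := by
  induction n using Polynomial.Chebyshev.induct with
  | zero => simp
  | one => simp [U_add_one, mul_comm]
  | add_two n ih₁ ih₀ =>
    have h₁ := U_add_two R (m + n)
    have h₂ := U_add_two R n
    have h₃ := U_add_one R n
    linear_combination (norm := ring_nf)
      h₁ - U R m * h₂ + U R (m - 1) * h₃ + 2 * (X : R[X]) * ih₁ - ih₀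
  | neg_add_one n ih₀ ih₁ =>
    have h₁ := U_sub_one R (m - n)
    have h₂ := U_sub_one R (-n)
    have h₃ := U_sub_two R (-n)
    linear_combination (norm := ring_nf)
      h₁ - U R m * h₂ + U R (m - 1) * h₃ + 2 * (X : R[X]) * ih₀ - ih₁

theorem two_mul_X_sq_sub_one_mul_chebyshev_U_mul_U (m n : ℤ) :
    2 * (X ^ 2 - 1) * (U R m * U R n) = T R (m + n + 2) - T R (m - n) := by
  induction n using Polynomial.Chebyshev.induct with
  | zero =>
    have h₁ := T_eq_X_mul_T_sub_pol_U R m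
    have h₂ := T_add_two R m
    simp only [U_zero, add_zero, sub_zero]
    linear_combination h₂ - 2 * h₁
  | one =>
    have h₁ := T_eq_X_mul_T_sub_pol_U R m
    have h₂ := T_add_two R m
    have h₃ := T_add_two R (m + 1)
    have h₄ := T_sub_one R m
    rw [U_one]
    linear_combination (norm := ring_nf) 2 * (X : R[X]) * h₂ - 4 * (X : R[X]) * h₁ - h₃ + h₄
  | add_two n ih₁ ih₀ =>
    have h₁ := U_add_two R n
    have h₂ := T_add_two R (m + n + 2)
    have h₃ := T_sub_two R (m - n)
    linear_combination (norm := ring_nf)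
      2 * ((X : R[X]) ^ 2 - 1) * U R m * h₁ - h₂ + h₃ + 2 * (X : R[X]) * ih₁ - ih₀
  | neg_add_one n ih₀ ih₁ =>
    have h₁ := U_sub_one R (-n)
    have h₂ := T_sub_one R (m - n + 2)
    have h₃ := T_add_one R (m + n)
    linear_combination (norm := ring_nf)
      2 * ((X : R[X]) ^ 2 - 1) * U R m * h₁ - h₂ + h₃ + 2 * (X : R[X]) * ih₀ - ih₁

theorem two_mul_sum_Ioc_chebyshev_T (a : ℤ) {m n : ℤ} (hmn : m ≤ n) :
    2 * ∑ i ∈ Ioc m n, T R (2 * i + a) = U R (2 * n + a) - U R (2 * m + a) := by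
  rw [mul_sum, ← sum_Ioc_int_sub_pred (fun i ↦ U R (2 * i + a)) hmn]
  refine sum_congr rfl fun i _ ↦ ?_
  linear_combination (norm := ring_nf) two_mul_T_eq_U_sub_U R (2 * i + a - 2)

theorem four_mul_X_sq_sub_one_mul_sum_Ioc_chebyshev_U_mul_U (a b : ℤ) {m n : ℤ} (hmn : m ≤ n) :
    4 * (X ^ 2 - 1) * ∑ i ∈ Ioc m n, U R (i + a) * U R (i + b) =
      U R (2 * n + (a + b + 2)) - U R (2 * m + (a + b + 2))
        - 2 * ((n - m : ℤ) : R[X]) * T R (a - b) := by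
  have product_formula (i : ℤ) : 2 * (X ^ 2 - 1) * (U R (i + a) * U R (i + b)) =
      T R (2 * i + (a + b + 2)) - T R (a - b) := by
    rw [two_mul_X_sq_sub_one_mul_chebyshev_U_mul_U]
    ring_nf
  have card_Ioc : ((#(Ioc m n) : ℕ) : R[X]) = ((n - m : ℤ) : R[X]) := by
    rw [← Int.cast_natCast, Int.card_Ioc_of_le m n hmn]
  calc 4 * (X ^ 2 - 1) * ∑ i ∈ Ioc m n, U R (i + a) * U R (i + b)
      = 2 * ∑ i ∈ Ioc m n, 2 * (X ^ 2 - 1) * (U R (i + a) * U R (i + b)) := by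
        rw [← mul_sum]; ring
    _ = 2 * ∑ i ∈ Ioc m n, T R (2 * i + (a + b + 2)) - 2 * (#(Ioc m n) * T R (a - b)) := by
        simp only [product_formula, sum_sub_distrib, sum_const, nsmul_eq_mul]; ring
    _ = _ := by rw [two_mul_sum_Ioc_chebyshev_T R _ hmn, card_Ioc, mul_assoc]

theorem four_mul_X_sq_sub_one_mul_sum_Icc_chebyshev_U_pred_mul_U_succ (k : ℕ) :
    4 * (X ^ 2 - 1) * ∑ i ∈ Icc (1 : ℤ) k, U R (i - 1) * U R (i + 1) =
      U R 2 * U R (2 * k) - 2 * X * U R (2 * k - 1) - 2 * ((k : R[X]) + 1) * T R 2 - 1 := by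
  have telescoped : 4 * (X ^ 2 - 1) * ∑ i ∈ Icc (1 : ℤ) k, U R (i - 1) * U R (i + 1) =
      U R (2 * k + 2) - U R 2 - 2 * (k : R[X]) * T R 2 := by
    simpa [← sub_eq_add_neg, ← Icc_add_one_left_eq_Ioc, -U_add_two] using
      four_mul_X_sq_sub_one_mul_sum_Ioc_chebyshev_U_mul_U R (-1) 1 k.cast_nonneg
  have addition : U R (2 * k + 2) = U R 2 * U R (2 * k) - 2 * X * U R (2 * k - 1) := by
    rw [add_comm, chebyshev_U_add, show (2 : ℤ) - 1 = 1 from rfl, U_one]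
  have U_two_eq : U R 2 = 2 * T R 2 + 1 := by
    simpa only [zero_add, U_zero] using U_eq_two_mul_T_add_U R 0
  linear_combination telescoped + addition - U_two_eq

theorem sum_q34_general {K : Type*} [Field K] [NeZero (2 : K)] (k : ℕ) (x : K) (hx : x ^ 2 ≠ 1) :
    ∑ i ∈ Icc (1 : ℤ) k, (U K (i - 1)).eval x * (U K (i + 1)).eval x =
      ((U K 2).eval x * (U K (2 * k)).eval x - 2 * x * (U K (2 * k - 1)).eval x -
          2 * (k + 1) * (T K 2).eval x - 1) / (4 * (x ^ 2 - 1)) := by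
  have denominator_ne_zero : 4 * (x ^ 2 - 1) ≠ 0 := by
    rw [show (4 : K) = 2 * 2 by norm_num]
    exact mul_ne_zero (mul_ne_zero two_ne_zero two_ne_zero) (sub_ne_zero.mpr hx)
  rw [eq_div_iff denominator_ne_zero, mul_comm]
  simpa [eval_finsetSum] using congrArg (eval x)
    (four_mul_X_sq_sub_one_mul_sum_Icc_chebyshev_U_pred_mul_U_succ K k)

end Chebyshev

/-- `Σ_{i=1}^{k} U_{i-1}(x)·U_{i+1}(x) = (U_2(x)·U_{2k}(x) - 2x·U_{2k-1}(x) - 2(k+1)·T_2(x) - 1)/(4(x² - 1))`. -/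
theorem sum_q34 (k : ℕ) (hk : 1 ≤ k) (x : ℝ) (hx : x ^ 2 ≠ 1) :
    ∑ i ∈ Finset.Icc (1 : ℤ) (k : ℤ), chebU (i - 1) x * chebU (i + 1) x =
      (chebU 2 x * chebU (2 * (k : ℤ)) x - 2 * x * chebU (2 * (k : ℤ) - 1) x -
          2 * (k + 1) * chebT 2 x - 1) / (4 * (x ^ 2 - 1)) :=
  sum_q34_general k x hx
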